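/- For every dimension d ≥ 2 and all real numbers 0 < ρ ≤ R there exists a constant C > 0 (depending only on d, ρ, R) with the following property: for every open bounded convex set Ω ⊆ ℝ^d such that closedBall(x₀, ρ) ⊆ Ω for some x₀ and Ω ⊆ ball(0, R), and for every continuously differentiable function u : ℝ^d → ℝ, one has ∫_{frontier Ω} u² dH^{d−1} ≤ C · ∫_Ω ( u(x)² + ‖∇u(x)‖² ) dx. -/

import Mathlib

open Metric MeasureTheory

/-!
Place the origin at the centre of the inscribed ball. On each ray `s ↦ s • v` the radial form of
the divergence theorem bounds `u²` at the boundary point `T • v` by the integral of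
`s ^ (d - 1) * (u² + ‖∇u‖²)` over `0 < s < T`. Let `v` run through a face of the cube
`[-1, 1]^d`: then `s ^ (d - 1) ds dv` is Lebesgue measure on the cone over that face, so the
integrals along the rays add up to at most the integral over `Ω`. The boundary is the union of the
radial projections of the `2 d` faces, and since the gauge of `Ω` is `ρ⁻¹`-Lipschitz and at least
`‖·‖ / R`, these projections distort `(d - 1)`-dimensional measure by a factor controlled by `ρ`
and `R`.
-/

open Set
open scoped NNReal ENNReal

section Ray

variable {E : Type*} [NormedAddCommGroup E] [NormedSpace ℝ E] {u : E → ℝ}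

/-- The integrand of the squared `H¹` norm of `u`. -/
noncomputable def h1Density (u : E → ℝ) (x : E) : ℝ := u x ^ 2 + ‖fderiv ℝ u x‖ ^ 2

lemma h1Density_nonneg (u : E → ℝ) (x : E) : 0 ≤ h1Density u x := by
  unfold h1Density; positivity

lemma continuous_h1Density (hu : ContDiff ℝ 1 u) : Continuous (h1Density u) :=
  (hu.continuous.pow 2).add ((hu.continuous_fderiv one_ne_zero).norm.pow 2)

lemma h1Density_comp_add_left (u : E → ℝ) (a x : E) :
    h1Density (fun y ↦ u (a + y)) x = h1Density u (a + x) := by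
  simp only [h1Density, fderiv_comp_add_left]

lemma two_mul_mul_fderiv_le (u : E → ℝ) (x v : E) :
    2 * u x * fderiv ℝ u x v ≤ ‖v‖ * h1Density u x := by
  set L := fderiv ℝ u x
  calc 2 * u x * L v ≤ 2 * |u x| * (‖L‖ * ‖v‖) := by
        refine (le_abs_self _).trans ?_
        rw [abs_mul, abs_mul, abs_two]
        gcongr
        exact L.le_opNorm v
    _ = ‖v‖ * (2 * |u x| * ‖L‖) := by ring
    _ ≤ ‖v‖ * (|u x| ^ 2 + ‖L‖ ^ 2) := by gcongr; exact two_mul_le_add_sq _ _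
    _ = ‖v‖ * h1Density u x := by rw [sq_abs, h1Density]

lemma hasDerivAt_pow_mul_sq_smul (hu : Differentiable ℝ u) (v : E) (m : ℕ) (s : ℝ) :
    HasDerivAt (fun s : ℝ ↦ s ^ (m + 1) * u (s • v) ^ 2)
      (s ^ m * ((m + 1) * u (s • v) ^ 2 + s * (2 * u (s • v) * fderiv ℝ u (s • v) v))) s := by
  have hray : HasDerivAt (fun s : ℝ ↦ u (s • v)) (fderiv ℝ u (s • v) v) s :=
    (hu _).hasFDerivAt.comp_hasDerivAt s (by simpa using (hasDerivAt_id s).smul_const v)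
  convert! (hasDerivAt_pow (m + 1) s).mul (hray.pow 2) using 1
  simp only [Nat.add_sub_cancel, Nat.cast_add, Nat.cast_one, Pi.pow_apply]
  ring

-- The radial form of the divergence theorem for the vector field `x ↦ u x ^ 2 • x`.
lemma pow_mul_sq_le_integral_h1Density (hu : ContDiff ℝ 1 u) (v : E) (m : ℕ) {T : ℝ}
    (hT : 0 ≤ T) :
    T ^ (m + 1) * u (T • v) ^ 2 ≤
      (m + 1 + T * ‖v‖) * ∫ s in (0)..T, s ^ m * h1Density u (s • v) := by
  have hdens := continuous_h1Density hu
  have hu₀ : Continuous u := hu.continuous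
  have hFTC := intervalIntegral.integral_eq_sub_of_hasDerivAt (a := 0) (b := T)
    (fun s _ ↦ hasDerivAt_pow_mul_sq_smul (hu.differentiable one_ne_zero) v m s)
    (Continuous.intervalIntegrable (by fun_prop) _ _)
  rw [zero_pow m.succ_ne_zero, zero_mul, sub_zero] at hFTC
  rw [← hFTC, ← intervalIntegral.integral_const_mul]
  refine intervalIntegral.integral_mono_on hT (Continuous.intervalIntegrable (by fun_prop) _ _)
    (Continuous.intervalIntegrable (by fun_prop) _ _) fun s hs ↦ ?_
  have hs₀ : 0 ≤ s := hs.1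
  have hsq : u (s • v) ^ 2 ≤ h1Density u (s • v) := le_add_of_nonneg_right (sq_nonneg _)
  have hcross : s * (2 * u (s • v) * fderiv ℝ u (s • v) v) ≤ T * (‖v‖ * h1Density u (s • v)) :=
    (mul_le_mul_of_nonneg_left (two_mul_mul_fderiv_le u _ v) hs₀).trans
      (mul_le_mul_of_nonneg_right hs.2 (mul_nonneg (norm_nonneg v) (h1Density_nonneg u _)))
  calc s ^ m * ((m + 1) * u (s • v) ^ 2 + s * (2 * u (s • v) * fderiv ℝ u (s • v) v))
      ≤ s ^ m * ((m + 1) * h1Density u (s • v) + T * (‖v‖ * h1Density u (s • v))) := by gcongr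
    _ = (m + 1 + T * ‖v‖) * (s ^ m * h1Density u (s • v)) := by ring

lemma ofReal_sq_le_lintegral_h1Density (hu : ContDiff ℝ 1 u) (v : E) (m : ℕ) {T : ℝ}
    (hT : 0 < T) :
    ENNReal.ofReal (u (T • v) ^ 2) ≤ ENNReal.ofReal (T⁻¹ ^ (m + 1) * (m + 1 + T * ‖v‖)) *
      ∫⁻ s in Ioo 0 T, ENNReal.ofReal (s ^ m) * ENNReal.ofReal (h1Density u (s • v)) := by
  have hdens := continuous_h1Density hu
  have hnonneg : ∀ s ∈ Ioo 0 T, 0 ≤ s ^ m * h1Density u (s • v) := fun s hs ↦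
    mul_nonneg (pow_nonneg hs.1.le m) (h1Density_nonneg u _)
  have hint : IntegrableOn (fun s : ℝ ↦ s ^ m * h1Density u (s • v)) (Ioo 0 T) :=
    (Continuous.integrableOn_Icc (by fun_prop)).mono_set Ioo_subset_Icc_self
  have hray : u (T • v) ^ 2 ≤ T⁻¹ ^ (m + 1) * (m + 1 + T * ‖v‖) *
      ∫ s in Ioo 0 T, s ^ m * h1Density u (s • v) := by
    rw [← integral_Ioc_eq_integral_Ioo, ← intervalIntegral.integral_of_le hT.le, mul_assoc,
      inv_pow, le_inv_mul_iff₀ (by positivity)]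
    exact pow_mul_sq_le_integral_h1Density hu v m hT.le
  calc ENNReal.ofReal (u (T • v) ^ 2)
      ≤ ENNReal.ofReal (T⁻¹ ^ (m + 1) * (m + 1 + T * ‖v‖)) *
          ∫⁻ s in Ioo 0 T, ENNReal.ofReal (s ^ m * h1Density u (s • v)) := by
        rw [← ofReal_integral_eq_lintegral_ofReal hint
          ((ae_restrict_mem measurableSet_Ioo).mono hnonneg), ← ENNReal.ofReal_mul (by positivity)]
        exact ENNReal.ofReal_le_ofReal hray
    _ = _ := by
        congr 1
        refine setLIntegral_congr_fun measurableSet_Ioo fun s hs ↦ ?_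
        exact ENNReal.ofReal_mul (pow_nonneg hs.1.le m)

end Ray

section RadialProjection

variable {E : Type*} [NormedAddCommGroup E] [NormedSpace ℝ E] {S : Set E} {u : E → ℝ}
  {ρ R : ℝ≥0}

/-- The radial projection onto the frontier of a convex neighbourhood `S` of the origin; it takes
the junk value `0` on the rays that stay in `S`, where `gauge S` vanishes. -/
noncomputable def radialProj (S : Set E) (x : E) : E := (gauge S x)⁻¹ • x

lemma radialProj_smul {t : ℝ} (ht : 0 < t) (x : E) : radialProj S (t • x) = radialProj S x := by
  rw [radialProj, radialProj, gauge_smul_of_nonneg ht.le, smul_eq_mul, smul_smul, mul_inv_rev,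
    inv_mul_cancel_right₀ ht.ne']

lemma radialProj_of_mem_frontier (hconv : Convex ℝ S) (hS : S ∈ nhds 0) {x : E}
    (hx : x ∈ frontier S) : radialProj S x = x := by
  rw [radialProj, (gauge_eq_one_iff_mem_frontier hconv hS).2 hx, inv_one, one_smul]

lemma smul_mem_interior_of_lt_inv_gauge (hconv : Convex ℝ S) (hS : S ∈ nhds 0) {x : E} {s : ℝ}
    (hs : s ∈ Ioo 0 (gauge S x)⁻¹) : s • x ∈ interior S := by
  have hg : 0 < gauge S x := inv_pos.1 (hs.1.trans hs.2)
  rw [← gauge_lt_one_iff_mem_interior hconv hS, gauge_smul_of_nonneg hs.1.le, smul_eq_mul]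
  exact (lt_inv_mul_iff₀' hg).1 (by simpa using hs.2)

lemma norm_radialProj_le (hconv : Convex ℝ S) (hS : S ∈ nhds 0) (hR : S ⊆ closedBall 0 R)
    (x : E) : ‖radialProj S x‖ ≤ R := by
  have hgauge : gauge S (radialProj S x) ≤ 1 := by
    rw [radialProj, gauge_smul_of_nonneg (inv_nonneg.2 (gauge_nonneg x)), smul_eq_mul]
    exact inv_mul_le_one
  exact mem_closedBall_zero_iff.1 <|
    closure_minimal hR isClosed_closedBall ((gauge_le_one_iff_mem_closure hconv hS).1 hgauge)

lemma gauge_pos_of_subset_closedBall (hS : S ∈ nhds 0) (hR : S ⊆ closedBall 0 R) {x : E}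
    (hx : x ≠ 0) : 0 < gauge S x :=
  (gauge_pos (absorbent_nhds_zero hS)
    (NormedSpace.isVonNBounded_of_isBounded ℝ (isBounded_closedBall.subset hR))).2 hx

lemma lipschitzOnWith_radialProj (hconv : Convex ℝ S) (hρ : 0 < ρ) (hball : ball 0 ρ ⊆ S)
    (hR : S ⊆ closedBall 0 R) :
    LipschitzOnWith (R * (1 + R / ρ)) (radialProj S) {x | 1 ≤ ‖x‖} := by
  have hS : S ∈ nhds 0 := Filter.mem_of_superset (ball_mem_nhds 0 hρ) hball
  have hpos : ∀ x ∈ {x : E | 1 ≤ ‖x‖}, 0 < gauge S x := fun x hx ↦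
    gauge_pos_of_subset_closedBall hS hR (norm_pos_iff.1 (one_pos.trans_le hx))
  refine LipschitzOnWith.of_dist_le_mul fun x hx y hy ↦ ?_
  have hinv : (gauge S x)⁻¹ ≤ R := by
    refine le_trans ?_ (norm_radialProj_le hconv hS hR x)
    rw [radialProj, norm_smul, Real.norm_of_nonneg (inv_nonneg.2 (gauge_nonneg x))]
    exact le_mul_of_one_le_right (inv_nonneg.2 (gauge_nonneg x)) hx
  have hlip : |gauge S y - gauge S x| ≤ ρ⁻¹ * ‖x - y‖ := by
    simpa [dist_eq_norm, norm_sub_rev y x] using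
      (hconv.lipschitzWith_gauge hρ hball).dist_le_mul y x
  have hsplit : radialProj S x - radialProj S y =
      (gauge S x)⁻¹ • ((x - y) + (gauge S y - gauge S x) • radialProj S y) := by
    have hy' : gauge S y • radialProj S y = y := smul_inv_smul₀ (hpos y hy).ne' y
    rw [sub_smul, hy', smul_add, smul_sub, smul_sub, inv_smul_smul₀ (hpos x hx).ne', radialProj]
    abel
  calc dist (radialProj S x) (radialProj S y)
      = (gauge S x)⁻¹ * ‖(x - y) + (gauge S y - gauge S x) • radialProj S y‖ := by
        rw [dist_eq_norm, hsplit, norm_smul, Real.norm_of_nonneg (inv_nonneg.2 (gauge_nonneg x))]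
    _ ≤ R * (‖x - y‖ + |gauge S y - gauge S x| * ‖radialProj S y‖) := by
        gcongr
        exact (norm_add_le _ _).trans_eq (by rw [norm_smul, Real.norm_eq_abs])
    _ ≤ R * (‖x - y‖ + ρ⁻¹ * ‖x - y‖ * R) := by
        gcongr
        exact norm_radialProj_le hconv hS hR y
    _ = ↑(R * (1 + R / ρ)) * dist x y := by
        rw [dist_eq_norm]; push_cast; ring

lemma ofReal_sq_radialProj_le (hconv : Convex ℝ S) (hρ : 0 < ρ) (hball : ball 0 ρ ⊆ S)
    (hR : S ⊆ closedBall 0 R) (hu : ContDiff ℝ 1 u) (m : ℕ) {v : E} (hv : v ≠ 0) :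
    ENNReal.ofReal (u (radialProj S v) ^ 2) ≤
      ((‖v‖₊ / ρ) ^ (m + 1) * (m + 1 + R) : ℝ≥0) * ∫⁻ s in Ioi 0, ENNReal.ofReal (s ^ m) *
        (interior S).indicator (fun x ↦ ENNReal.ofReal (h1Density u x)) (s • v) := by
  have hS : S ∈ nhds 0 := Filter.mem_of_superset (ball_mem_nhds 0 hρ) hball
  have hgauge : 0 < gauge S v := gauge_pos_of_subset_closedBall hS hR hv
  have hgauge_le : gauge S v ≤ ‖v‖ / ρ :=
    (le_div_iff₀' (NNReal.coe_pos.2 hρ)).2 (mul_gauge_le_norm hball)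
  have hnorm : (gauge S v)⁻¹ * ‖v‖ ≤ R := by
    simpa [radialProj, norm_smul, abs_of_pos hgauge] using norm_radialProj_le hconv hS hR v
  refine (ofReal_sq_le_lintegral_h1Density hu v m (inv_pos.2 hgauge)).trans (mul_le_mul' ?_ ?_)
  · rw [inv_inv]
    refine ENNReal.ofReal_le_coe.2 ?_
    push_cast
    gcongr
  · calc ∫⁻ s in Ioo 0 (gauge S v)⁻¹, ENNReal.ofReal (s ^ m) * ENNReal.ofReal (h1Density u (s • v))
        = ∫⁻ s in Ioo 0 (gauge S v)⁻¹, ENNReal.ofReal (s ^ m) *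
            (interior S).indicator (fun x ↦ ENNReal.ofReal (h1Density u x)) (s • v) :=
          setLIntegral_congr_fun measurableSet_Ioo fun s hs ↦ by
            simp only [indicator_of_mem (smul_mem_interior_of_lt_inv_gauge hconv hS hs)]
      _ ≤ _ := lintegral_mono_set fun s hs ↦ hs.1

end RadialProjection

lemma lintegral_image_hausdorffMeasure_le {X Y : Type*} [MetricSpace X] [MeasurableSpace X]
    [BorelSpace X] [MetricSpace Y] [MeasurableSpace Y] [BorelSpace Y] {K : ℝ≥0} {F : X → Y}
    (hF : LipschitzWith K F) {d : ℝ} (hd : 0 ≤ d) (s : Set X) {f : Y → ℝ≥0∞} (hf : Measurable f) :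
    ∫⁻ y in F '' s, f y ∂μH[d] ≤ (K : ℝ≥0∞) ^ d * ∫⁻ x in s, f (F x) ∂μH[d] := by
  have hFm : Measurable F := hF.continuous.measurable
  have hle : μH[d].restrict (F '' s) ≤ (K : ℝ≥0∞) ^ d • (μH[d].restrict s).map F := by
    refine Measure.le_iff.2 fun t ht ↦ ?_
    rw [Measure.restrict_apply ht, Measure.smul_apply, Measure.map_apply hFm ht,
      Measure.restrict_apply (hFm ht), ← image_preimage_inter]
    exact hF.hausdorffMeasure_image_le hd _
  calc ∫⁻ y in F '' s, f y ∂μH[d]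
      ≤ ∫⁻ y, f y ∂((K : ℝ≥0∞) ^ d • (μH[d].restrict s).map F) := lintegral_mono' hle le_rfl
    _ = (K : ℝ≥0∞) ^ d * ∫⁻ x in s, f (F x) ∂μH[d] := by
      rw [lintegral_smul_measure, lintegral_map hf hFm, smul_eq_mul]

lemma ofReal_abs_pow_mul_lintegral_comp_smul {E : Type*} [NormedAddCommGroup E] [NormedSpace ℝ E]
    [FiniteDimensional ℝ E] [MeasurableSpace E] [BorelSpace E] (μ : Measure E)
    [μ.IsAddHaarMeasure] {s : ℝ} (hs : s ≠ 0) {f : E → ℝ≥0∞} (hf : Measurable f) :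
    ENNReal.ofReal (|s| ^ Module.finrank ℝ E) * ∫⁻ x, f (s • x) ∂μ = ∫⁻ x, f x ∂μ := by
  rw [← lintegral_map hf (measurable_const_smul s), Measure.map_addHaar_smul μ hs,
    lintegral_smul_measure, smul_eq_mul, ← mul_assoc, ← ENNReal.ofReal_mul (by positivity),
    ← abs_pow, ← abs_mul, mul_inv_cancel₀ (pow_ne_zero _ hs), abs_one, ENNReal.ofReal_one, one_mul]

section CubeFaces

variable {n : ℕ} {i : Fin (n + 1)} {a : ℝ}

/-- The point of `ℝ^(n+1)` with `i`-th coordinate `a` and remaining coordinates `w`. For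
`|a| = 1` and `‖w‖ ≤ 1` these points form a face of the cube `[-1, 1]^(n+1)`. -/
def insertCoord (i : Fin (n + 1)) (a : ℝ) (w : Fin n → ℝ) : EuclideanSpace ℝ (Fin (n + 1)) :=
  WithLp.toLp 2 (i.insertNth (α := fun _ ↦ ℝ) a w)

lemma smul_insertCoord (i : Fin (n + 1)) (s a : ℝ) (w : Fin n → ℝ) :
    s • insertCoord i a w = insertCoord i (s * a) (s • w) := by
  ext j
  refine Fin.succAboveCases i ?_ (fun j ↦ ?_) j <;> simp [insertCoord]

lemma continuous_insertCoord (i : Fin (n + 1)) :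
    Continuous fun p : ℝ × (Fin n → ℝ) ↦ insertCoord i p.1 p.2 :=
  (PiLp.continuous_toLp 2 _).comp
    (Continuous.finInsertNth (A := fun _ ↦ ℝ) i continuous_fst continuous_snd)

lemma one_le_norm_insertCoord (ha : |a| = 1) (w : Fin n → ℝ) : 1 ≤ ‖insertCoord i a w‖ := by
  simpa [insertCoord, ha] using PiLp.norm_apply_le (insertCoord i a w) i

lemma norm_toLp_two_le {ι : Type*} [Fintype ι] (x : ι → ℝ) :
    ‖WithLp.toLp 2 x‖ ≤ √(Fintype.card ι) * ‖x‖ := by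
  simpa [Real.sqrt_eq_rpow] using (PiLp.lipschitzWith_toLp 2 fun _ : ι ↦ ℝ).dist_le_mul x 0

lemma lipschitzWith_insertCoord (i : Fin (n + 1)) (a : ℝ) :
    LipschitzWith (NNReal.sqrt (n + 1)) (insertCoord i a) := by
  have hinsert : LipschitzWith 1 (i.insertNth (α := fun _ ↦ ℝ) a) := by
    refine LipschitzWith.of_dist_le_mul fun w w' ↦ ?_
    simp [Fin.dist_insertNth_insertNth]
  have htoLp : LipschitzWith (NNReal.sqrt (n + 1)) (WithLp.toLp 2 : (Fin (n + 1) → ℝ) → _) := by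
    simpa [NNReal.sqrt_eq_rpow] using PiLp.lipschitzWith_toLp 2 fun _ : Fin (n + 1) ↦ ℝ
  exact mul_one (NNReal.sqrt (n + 1)) ▸ htoLp.comp hinsert

lemma norm_insertCoord_le (ha : |a| ≤ 1) {w : Fin n → ℝ} (hw : ‖w‖ ≤ 1) :
    ‖insertCoord i a w‖ ≤ √(n + 1) := by
  have hinsert : ‖i.insertNth (α := fun _ ↦ ℝ) a w‖ ≤ 1 := by
    refine (pi_norm_le_iff_of_nonneg zero_le_one).2 (i.forall_iff_succAbove.2 ⟨?_, fun j ↦ ?_⟩)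
    · simpa using ha
    · simpa using (norm_le_pi_norm w j).trans hw
  refine (norm_toLp_two_le _).trans ?_
  simpa using mul_le_of_le_one_right (Real.sqrt_nonneg (n + 1)) hinsert

lemma exists_eq_smul_insertCoord {x : EuclideanSpace ℝ (Fin (n + 1))} (hx : x ≠ 0) :
    ∃ (i : Fin (n + 1)) (a : ℝ), |a| = 1 ∧ ∃ w ∈ closedBall (0 : Fin n → ℝ) 1, ∃ t > (0 : ℝ),
      x = t • insertCoord i a w := by
  obtain ⟨i, hi⟩ := Finite.exists_max fun j ↦ |x j|
  have hpos : 0 < |x i| := by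
    refine (abs_nonneg _).lt_of_ne fun h₀ ↦ hx ?_
    ext j
    simpa using (hi j).trans_eq h₀.symm
  refine ⟨i, |x i|⁻¹ * x i, ?_, |x i|⁻¹ • fun j ↦ x (i.succAbove j), ?_, |x i|, hpos, ?_⟩
  · rw [abs_mul, abs_inv, abs_abs, inv_mul_cancel₀ hpos.ne']
  · rw [mem_closedBall_zero_iff, norm_smul, norm_inv, Real.norm_eq_abs, abs_abs,
      inv_mul_le_iff₀ hpos, mul_one]
    exact (pi_norm_le_iff_of_nonneg hpos.le).2 fun j ↦ hi _
  · rw [smul_insertCoord, mul_inv_cancel_left₀ hpos.ne', smul_inv_smul₀ hpos.ne']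
    ext j
    refine Fin.succAboveCases i ?_ (fun j ↦ ?_) j <;> simp [insertCoord]

lemma lintegral_lintegral_insertCoord (i : Fin (n + 1))
    {G : EuclideanSpace ℝ (Fin (n + 1)) → ℝ≥0∞} (hG : Measurable G) :
    ∫⁻ a, ∫⁻ w, G (insertCoord i a w) = ∫⁻ x, G x := by
  rw [← (PiLp.volume_preserving_toLp (Fin (n + 1))).lintegral_comp hG,
    ← (volume_preserving_piFinSuccAbove (fun _ : Fin (n + 1) ↦ ℝ) i).symm.lintegral_comp
      (f := fun x ↦ G (WithLp.toLp 2 x)) (hG.comp (WithLp.measurable_toLp 2 _)),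
    Measure.volume_eq_prod, lintegral_prod]
  · rfl
  · exact (hG.comp (continuous_insertCoord i).measurable).aemeasurable

lemma lintegral_lintegral_smul_insertCoord_le (ha : |a| = 1)
    {G : EuclideanSpace ℝ (Fin (n + 1)) → ℝ≥0∞} (hG : Measurable G) :
    ∫⁻ w, ∫⁻ s in Ioi 0, ENNReal.ofReal (s ^ n) * G (s • insertCoord i a w) ≤ ∫⁻ x, G x := by
  have hface : Continuous (insertCoord i a) := (lipschitzWith_insertCoord i a).continuous
  have hslice (b : ℝ) : Measurable fun w ↦ G (insertCoord i b w) :=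
    hG.comp (lipschitzWith_insertCoord i b).continuous.measurable
  have hcone : Measurable fun p : (Fin n → ℝ) × ℝ ↦
      ENNReal.ofReal (p.2 ^ n) * G (p.2 • insertCoord i a p.1) :=
    (by fun_prop : Measurable fun p : (Fin n → ℝ) × ℝ ↦ ENNReal.ofReal (p.2 ^ n)).mul
      (hG.comp (Continuous.measurable (by fun_prop)))
  have hscale : ∀ s ∈ Ioi (0 : ℝ), ∫⁻ w, ENNReal.ofReal (s ^ n) * G (s • insertCoord i a w) =
      ∫⁻ w, G (insertCoord i (s * a) w) := by
    intro s (hs : 0 < s)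
    simp_rw [smul_insertCoord]
    rw [lintegral_const_mul' _ _ ENNReal.ofReal_ne_top,
      ← ofReal_abs_pow_mul_lintegral_comp_smul volume hs.ne' (hslice (s * a)),
      Module.finrank_fin_fun, abs_of_pos hs]
  calc ∫⁻ w, ∫⁻ s in Ioi 0, ENNReal.ofReal (s ^ n) * G (s • insertCoord i a w)
      = ∫⁻ s in Ioi 0, ∫⁻ w, ENNReal.ofReal (s ^ n) * G (s • insertCoord i a w) :=
        lintegral_lintegral_swap hcone.aemeasurable
    _ = ∫⁻ s in Ioi 0, ∫⁻ w, G (insertCoord i (s * a) w) :=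
        setLIntegral_congr_fun measurableSet_Ioi hscale
    _ ≤ ∫⁻ s, ∫⁻ w, G (insertCoord i (s * a) w) := setLIntegral_le_lintegral _ _
    _ = ∫⁻ s, ∫⁻ w, G (insertCoord i s w) := by
        rcases eq_or_eq_neg_of_abs_eq ha with rfl | rfl
        · simp only [mul_one]
        · simpa only [mul_neg_one] using
            lintegral_neg_eq_self (μ := volume) fun s ↦ ∫⁻ w, G (insertCoord i s w)
    _ = ∫⁻ x, G x := lintegral_lintegral_insertCoord i hG

end CubeFaces

section TraceInequality

variable {n : ℕ} {S : Set (EuclideanSpace ℝ (Fin (n + 1)))}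
  {u : EuclideanSpace ℝ (Fin (n + 1)) → ℝ} {ρ R : ℝ≥0}

/-- The constant of the trace inequality in `ℝ^d` for a convex set that contains a ball of radius
`ρ` and is contained in the concentric ball of radius `R`. Its factors are the number `2 d` of
faces of a cube, the distortion of `(d - 1)`-dimensional measure by the radial projection of a
face, and the bound for the squared boundary values on a ray through a face. -/
noncomputable def traceConst (d : ℕ) (ρ R : ℝ) : ℝ :=
  2 * d * ((R * (1 + R / ρ) * √d) ^ (d - 1) * ((√d / ρ) ^ d * (d + R)))

lemma traceConst_pos {d : ℕ} (hd : 0 < d) {ρ R : ℝ} (hρ : 0 < ρ) (hR : 0 < R) :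
    0 < traceConst d ρ R := by
  unfold traceConst
  positivity

lemma lintegral_sq_radialProj_insertCoord_le (hconv : Convex ℝ S) (hρ : 0 < ρ)
    (hball : ball 0 ρ ⊆ S) (hR : S ⊆ closedBall 0 R) (hu : ContDiff ℝ 1 u) (i : Fin (n + 1))
    {a : ℝ} (ha : |a| = 1) :
    ∫⁻ w in closedBall 0 1, ENNReal.ofReal (u (radialProj S (insertCoord i a w)) ^ 2) ≤
      ((NNReal.sqrt (n + 1) / ρ) ^ (n + 1) * (n + 1 + R) : ℝ≥0) *
        ∫⁻ x in interior S, ENNReal.ofReal (h1Density u x) := by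
  set G := (interior S).indicator fun x ↦ ENNReal.ofReal (h1Density u x) with hG
  have hGm : Measurable G :=
    (continuous_h1Density hu).measurable.ennreal_ofReal.indicator isOpen_interior.measurableSet
  have hray : ∀ w ∈ closedBall (0 : Fin n → ℝ) 1,
      ENNReal.ofReal (u (radialProj S (insertCoord i a w)) ^ 2) ≤
        ((NNReal.sqrt (n + 1) / ρ) ^ (n + 1) * (n + 1 + R) : ℝ≥0) *
          ∫⁻ s in Ioi 0, ENNReal.ofReal (s ^ n) * G (s • insertCoord i a w) := by
    intro w hw
    have hv : insertCoord i a w ≠ 0 :=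
      norm_pos_iff.1 (one_pos.trans_le (one_le_norm_insertCoord ha w))
    have hnorm : ‖insertCoord i a w‖₊ ≤ NNReal.sqrt (n + 1) := by
      simpa [← NNReal.coe_le_coe] using
        norm_insertCoord_le (i := i) ha.le (mem_closedBall_zero_iff.1 hw)
    refine (ofReal_sq_radialProj_le hconv hρ hball hR hu n hv).trans ?_
    gcongr
  calc ∫⁻ w in closedBall 0 1, ENNReal.ofReal (u (radialProj S (insertCoord i a w)) ^ 2)
      ≤ ∫⁻ w in closedBall 0 1, ((NNReal.sqrt (n + 1) / ρ) ^ (n + 1) * (n + 1 + R) : ℝ≥0) *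
          ∫⁻ s in Ioi 0, ENNReal.ofReal (s ^ n) * G (s • insertCoord i a w) :=
        setLIntegral_mono' measurableSet_closedBall hray
    _ = ((NNReal.sqrt (n + 1) / ρ) ^ (n + 1) * (n + 1 + R) : ℝ≥0) * ∫⁻ w in closedBall 0 1,
          ∫⁻ s in Ioi 0, ENNReal.ofReal (s ^ n) * G (s • insertCoord i a w) :=
        lintegral_const_mul' _ _ ENNReal.coe_ne_top
    _ ≤ ((NNReal.sqrt (n + 1) / ρ) ^ (n + 1) * (n + 1 + R) : ℝ≥0) * ∫⁻ x, G x := by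
        gcongr
        exact (setLIntegral_le_lintegral _ _).trans (lintegral_lintegral_smul_insertCoord_le ha hGm)
    _ = _ := by rw [hG, lintegral_indicator isOpen_interior.measurableSet]

lemma lintegral_sq_image_radialProj_le (hconv : Convex ℝ S) (hρ : 0 < ρ)
    (hball : ball 0 ρ ⊆ S) (hR : S ⊆ closedBall 0 R) (hu : ContDiff ℝ 1 u) (i : Fin (n + 1))
    {a : ℝ} (ha : |a| = 1) :
    ∫⁻ x in (fun w ↦ radialProj S (insertCoord i a w)) '' closedBall 0 1,
        ENNReal.ofReal (u x ^ 2) ∂μH[n] ≤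
      ((R * (1 + R / ρ) * NNReal.sqrt (n + 1)) ^ n *
        ((NNReal.sqrt (n + 1) / ρ) ^ (n + 1) * (n + 1 + R)) : ℝ≥0) *
        ∫⁻ x in interior S, ENNReal.ofReal (h1Density u x) := by
  have hlip : LipschitzWith (R * (1 + R / ρ) * NNReal.sqrt (n + 1))
      fun w ↦ radialProj S (insertCoord i a w) :=
    lipschitzOnWith_univ.1 <| (lipschitzOnWith_radialProj hconv hρ hball hR).comp
      (lipschitzWith_insertCoord i a).lipschitzOnWith fun w _ ↦ one_le_norm_insertCoord ha w
  have hvol : (μH[n] : Measure (Fin n → ℝ)) = volume := by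
    simpa using hausdorffMeasure_pi_real (ι := Fin n)
  have himage := lintegral_image_hausdorffMeasure_le hlip n.cast_nonneg (closedBall 0 1)
    (hu.continuous.pow 2).measurable.ennreal_ofReal
  rw [hvol, ENNReal.rpow_natCast] at himage
  refine himage.trans ?_
  rw [ENNReal.coe_mul (_ ^ n), ENNReal.coe_pow, mul_assoc (_ ^ n)]
  gcongr
  exact lintegral_sq_radialProj_insertCoord_le hconv hρ hball hR hu i ha

lemma frontier_subset_iUnion_image_radialProj (hconv : Convex ℝ S) (hS : S ∈ nhds 0) :
    frontier S ⊆ ⋃ i : Fin (n + 1),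
      (fun w ↦ radialProj S (insertCoord i 1 w)) '' closedBall 0 1 ∪
        (fun w ↦ radialProj S (insertCoord i (-1) w)) '' closedBall 0 1 := by
  intro x hx
  have hx₀ : x ≠ 0 := fun h ↦ hx.2 (h ▸ mem_interior_iff_mem_nhds.2 hS)
  obtain ⟨i, a, ha, w, hw, t, ht, rfl⟩ := exists_eq_smul_insertCoord hx₀
  have hproj : radialProj S (insertCoord i a w) = t • insertCoord i a w :=
    (radialProj_smul ht _).symm.trans (radialProj_of_mem_frontier hconv hS hx)
  rcases eq_or_eq_neg_of_abs_eq ha with rfl | rfl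
  · exact mem_iUnion.2 ⟨i, .inl ⟨w, hw, hproj⟩⟩
  · exact mem_iUnion.2 ⟨i, .inr ⟨w, hw, hproj⟩⟩

lemma lintegral_sq_frontier_le (hconv : Convex ℝ S) (hρ : 0 < ρ) (hball : ball 0 ρ ⊆ S)
    (hR : S ⊆ closedBall 0 R) (hu : ContDiff ℝ 1 u) :
    ∫⁻ x in frontier S, ENNReal.ofReal (u x ^ 2) ∂μH[n] ≤
      ENNReal.ofReal (traceConst (n + 1) ρ R) *
        ∫⁻ x in interior S, ENNReal.ofReal (h1Density u x) := by
  have hS : S ∈ nhds 0 := Filter.mem_of_superset (ball_mem_nhds 0 hρ) hball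
  set I := ∫⁻ x in interior S, ENNReal.ofReal (h1Density u x)
  set c : ℝ≥0 := (R * (1 + R / ρ) * NNReal.sqrt (n + 1)) ^ n *
    ((NNReal.sqrt (n + 1) / ρ) ^ (n + 1) * (n + 1 + R))
  have hconst : traceConst (n + 1) ρ R = (2 * (n + 1) * c : ℝ≥0) := by
    simp [traceConst, c]
  have hface (i : Fin (n + 1)) {a : ℝ} (ha : |a| = 1) :=
    lintegral_sq_image_radialProj_le hconv hρ hball hR hu i ha
  calc ∫⁻ x in frontier S, ENNReal.ofReal (u x ^ 2) ∂μH[n]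
      ≤ _ := lintegral_mono_set (frontier_subset_iUnion_image_radialProj hconv hS)
    _ ≤ _ := lintegral_iUnion_le _ _
    _ ≤ ∑' _ : Fin (n + 1), (c * I + c * I) := ENNReal.tsum_le_tsum fun i ↦
        (lintegral_union_le _ _ _).trans (add_le_add (hface i (by simp)) (hface i (by simp)))
    _ = ENNReal.ofReal (traceConst (n + 1) ρ R) * I := by
        rw [tsum_fintype, Finset.sum_const, Finset.card_univ, Fintype.card_fin, nsmul_eq_mul,
          hconst, ENNReal.ofReal_coe_nnreal]
        push_cast
        ring

theorem uniform_trace_inequality_general {d : ℕ} (hd : 1 ≤ d) {ρ R : ℝ} (hρ : 0 < ρ)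
    {Ω : Set (EuclideanSpace ℝ (Fin d))} (hconv : Convex ℝ Ω) {x₀ : EuclideanSpace ℝ (Fin d)}
    (hball : ball x₀ ρ ⊆ Ω) (hΩ : Ω ⊆ closedBall x₀ R) {u : EuclideanSpace ℝ (Fin d) → ℝ}
    (hu : ContDiff ℝ 1 u) :
    ∫⁻ x in frontier Ω, ENNReal.ofReal (u x ^ 2) ∂μH[(d : ℝ) - 1] ≤
      ENNReal.ofReal (traceConst d ρ R) *
        ∫⁻ x in Ω, ENNReal.ofReal (u x ^ 2 + ‖fderiv ℝ u x‖ ^ 2) := by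
  obtain ⟨n, rfl⟩ : ∃ n, d = n + 1 := ⟨d - 1, by omega⟩
  have hR : 0 ≤ R := nonempty_closedBall.1 ⟨x₀, hΩ (hball (mem_ball_self hρ))⟩
  lift ρ to ℝ≥0 using hρ.le
  lift R to ℝ≥0 using hR
  rw [Nat.cast_add_one, add_sub_cancel_right]
  have hemb : MeasurableEmbedding (x₀ + ·) := measurableEmbedding_addLeft x₀
  calc ∫⁻ x in frontier Ω, ENNReal.ofReal (u x ^ 2) ∂μH[n]
      = ∫⁻ y in frontier ((x₀ + ·) ⁻¹' Ω), ENNReal.ofReal (u (x₀ + y) ^ 2) ∂μH[n] := by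
        rw [← ((IsometryEquiv.addLeft x₀).measurePreserving_hausdorffMeasure n
          ).setLIntegral_comp_preimage_emb hemb]
        exact congrArg (∫⁻ y in ·, ENNReal.ofReal (u (x₀ + y) ^ 2) ∂μH[n])
          ((Homeomorph.addLeft x₀).preimage_frontier Ω)
    _ ≤ ENNReal.ofReal (traceConst (n + 1) ρ R) * ∫⁻ y in interior ((x₀ + ·) ⁻¹' Ω),
          ENNReal.ofReal (h1Density (fun y ↦ u (x₀ + y)) y) :=
        lintegral_sq_frontier_le (hconv.translate_preimage_right x₀) hρ
          (fun y hy ↦ hball (by simpa using hy)) (fun y hy ↦ by simpa using hΩ hy)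
          (hu.comp (contDiff_const.add contDiff_id))
    _ ≤ ENNReal.ofReal (traceConst (n + 1) ρ R) * ∫⁻ y in (x₀ + ·) ⁻¹' Ω,
          ENNReal.ofReal (h1Density u (x₀ + y)) := by
        simp_rw [h1Density_comp_add_left]
        gcongr
        exact interior_subset
    _ = ENNReal.ofReal (traceConst (n + 1) ρ R) * ∫⁻ x in Ω, ENNReal.ofReal (h1Density u x) := by
        congr 1
        exact (measurePreserving_add_left volume x₀).setLIntegral_comp_preimage_emb hemb
          (fun x ↦ ENNReal.ofReal (h1Density u x)) Ω

end TraceInequality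

/-- Payne–Weinberger-type trace inequality with constant depending only on the
dimension and on uniform geometric bounds (inradius `ρ` and circumradius `R`)
of the convex domain: `∫_{∂Ω} u² dH^{d−1} ≤ C ∫_Ω (u² + ‖∇u‖²) dx`. -/
theorem uniform_trace_inequality
    {d : ℕ} (hd : 2 ≤ d) (ρ R : ℝ) (hρ : 0 < ρ) (hρR : ρ ≤ R) :
    ∃ C : ℝ, 0 < C ∧
      ∀ Ω : Set (EuclideanSpace ℝ (Fin d)), IsOpen Ω →
        Bornology.IsBounded Ω → Convex ℝ Ω →
        (∃ x₀, closedBall x₀ ρ ⊆ Ω) → Ω ⊆ ball 0 R →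
        ∀ u : EuclideanSpace ℝ (Fin d) → ℝ, ContDiff ℝ 1 u →
        (∫⁻ x in frontier Ω, ENNReal.ofReal ((u x) ^ 2) ∂(μH[(d : ℝ) - 1])) ≤
          ENNReal.ofReal C *
            ∫⁻ x in Ω, ENNReal.ofReal ((u x) ^ 2 + ‖fderiv ℝ u x‖ ^ 2) := by
  refine ⟨traceConst d ρ (2 * R), traceConst_pos (by omega) hρ (by linarith),
    fun Ω _ _ hconv ⟨x₀, hx₀⟩ hΩR u hu ↦ uniform_trace_inequality_general (by omega) hρ hconv
      (ball_subset_closedBall.trans hx₀) (hΩR.trans ?_) hu⟩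
  have hx₀R : dist x₀ 0 < R := hΩR (hx₀ (mem_closedBall_self hρ.le))
  exact ball_subset_closedBall.trans (closedBall_subset_closedBall' (by rw [dist_comm]; linarith))
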